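/- Let γ = (1/3)exp(2πi/3), e = γΔ₁ + γ̄Δ₂ ∈ ℓ₀¹(ℤ/3ℤ). Then ⦀𝟙₀ − 2e⦀₁ = 2√3/3 and ⦀𝟙₀ − 2e⦀₂ = 1, where ⦀a⦀_p = sup{‖a*b‖_{(p)} : b ∈ ℓ₀¹(ℤ/3ℤ), ‖b‖_{(p)} ≤ 1} is the multiplier norm. (Note 𝟙₀ − 2e = (−i√3/3)(−Δ₁ + Δ₂).) -/

import Mathlib

/-!
Write `a = 𝟙₀ − 2e`. Computing `exp (2πi/3)` gives `a = s (δ₂ − δ₁)` with `s = i/√3`, so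
`(a * y)(g) = s (y (g − 2) − y (g − 1))`.

For `p = 1` the operator norm of convolution by `b` is `∑ ‖b g‖`, so the triangle inequality bounds
`‖a * b‖₍₁₎` by `2 |s| ‖b‖₍₁₎`, and `b = (δ₁ − δ₀)/2` attains this bound.

For `p = 2`, expanding squares gives `‖a * y‖² = ‖y‖² − |∑ y|²/3`. Hence convolution by `a` is a
contraction of `ℓ²`, isometric on functions of sum zero. Since `b * x` has sum zero whenever `b` does,
`‖a * b‖₍₂₎ ≤ ‖b‖₍₂₎`, and `b = a` attains the supremum, because `a * a` acts isometrically on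
functions of sum zero.
-/

open scoped ENNReal

noncomputable section

/-- Convolution of functions on `ℤ/3ℤ`: `(a * b) g = ∑ h, a h * b (g − h)`. -/
def conv (a b : ZMod 3 → ℂ) : ZMod 3 → ℂ :=
  fun g => ∑ h : ZMod 3, a h * b (g - h)

/-- The indicator function `δ_j`. -/
def delta (j : ZMod 3) : ZMod 3 → ℂ := fun h => if h = j then 1 else 0

/-- `Δ₁ = δ₁ − δ₀`. -/
def D1 : ZMod 3 → ℂ := delta 1 - delta 0

/-- `Δ₂ = δ₂ − δ₀`. -/
def D2 : ZMod 3 → ℂ := delta 2 - delta 0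

/-- `𝟙₀ = −(1/3)(Δ₁ + Δ₂)`, the identity of the augmentation ideal `ℓ₀¹(ℤ/3ℤ)`. -/
def one0 : ZMod 3 → ℂ := -(3 : ℂ)⁻¹ • (D1 + D2)

/-- `γ = (1/3)·exp(2πi/3)`. -/
def gam : ℂ := (1 / 3 : ℂ) * Complex.exp (2 * Real.pi * Complex.I / 3)

/-- `e = γΔ₁ + γ̄Δ₂`, a bicontractive idempotent of `ℓ₀¹(ℤ/3ℤ)`. -/
def eIdem : ZMod 3 → ℂ := gam • D1 + (starRingEnd ℂ) gam • D2

/-- `λ_p(a)`: the operator of left convolution by `a` on `ℓ^p(ℤ/3ℤ)`. -/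
def lam (p : ℝ≥0∞) [Fact (1 ≤ p)] (a : ZMod 3 → ℂ) :
    (PiLp p fun _ : ZMod 3 => ℂ) →L[ℂ] (PiLp p fun _ : ZMod 3 => ℂ) :=
  LinearMap.toContinuousLinearMap
    { toFun := fun b =>
        (WithLp.equiv p (ZMod 3 → ℂ)).symm (conv a (WithLp.equiv p (ZMod 3 → ℂ) b))
      map_add' := by
        intro b c
        apply (WithLp.equiv p (ZMod 3 → ℂ)).injective
        funext g
        simp [conv, mul_add, Finset.sum_add_distrib]
      map_smul' := by
        intro c b
        apply (WithLp.equiv p (ZMod 3 → ℂ)).injective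
        funext g
        simp [conv, Finset.mul_sum, mul_left_comm] }

/-- `‖a‖_{(p)} = ‖λ_p(a)‖`: the `L^p`-operator norm of `a`. -/
def opN (p : ℝ≥0∞) [Fact (1 ≤ p)] (a : ZMod 3 → ℂ) : ℝ := ‖lam p a‖

/-- The multiplier norm `⦀a⦀_p = sup {‖a*b‖_{(p)} : b ∈ ℓ₀¹(ℤ/3ℤ), ‖b‖_{(p)} ≤ 1}` of the
multiplier algebra `M₀^p(ℤ/3ℤ)`. -/
def mnorm (p : ℝ≥0∞) [Fact (1 ≤ p)] (a : ZMod 3 → ℂ) : ℝ :=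
  sSup {x : ℝ | ∃ b : ZMod 3 → ℂ,
    (∑ g : ZMod 3, b g = 0) ∧ opN p b ≤ 1 ∧ x = opN p (conv a b)}

lemma sum3 {M : Type*} [AddCommMonoid M] (f : ZMod 3 → M) : ∑ g, f g = f 0 + f 1 + f 2 :=
  Fin.sum_univ_three f

/-- The coordinates of a convolution product, with all index arithmetic in `ℤ/3ℤ` carried out. -/
lemma conv_coords (a b : ZMod 3 → ℂ) :
    conv a b 0 = a 0 * b 0 + a 1 * b 2 + a 2 * b 1 ∧
    conv a b 1 = a 0 * b 1 + a 1 * b 0 + a 2 * b 2 ∧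
    conv a b 2 = a 0 * b 2 + a 1 * b 1 + a 2 * b 0 := by
  refine ⟨?_, ?_, ?_⟩ <;> simp only [conv, sum3] <;> rfl

lemma funext3 {f g : ZMod 3 → ℂ} (h0 : f 0 = g 0) (h1 : f 1 = g 1) (h2 : f 2 = g 2) : f = g := by
  funext i
  fin_cases i
  exacts [h0, h1, h2]

lemma conv_assoc' (a b c : ZMod 3 → ℂ) : conv (conv a b) c = conv a (conv b c) := by
  obtain ⟨h0, h1, h2⟩ := conv_coords a b
  obtain ⟨k0, k1, k2⟩ := conv_coords b c
  obtain ⟨l0, l1, l2⟩ := conv_coords (conv a b) c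
  obtain ⟨m0, m1, m2⟩ := conv_coords a (conv b c)
  apply funext3
  · rw [l0, m0, h0, h1, h2, k0, k1, k2]; ring
  · rw [l1, m1, h0, h1, h2, k0, k1, k2]; ring
  · rw [l2, m2, h0, h1, h2, k0, k1, k2]; ring

/-- Summation over `ℤ/3ℤ` is multiplicative for convolution. -/
lemma sum_conv (a b : ZMod 3 → ℂ) : ∑ g, conv a b g = (∑ g, a g) * ∑ g, b g := by
  obtain ⟨h0, h1, h2⟩ := conv_coords a b
  simp only [sum3, h0, h1, h2]; ring

lemma lam_apply (p : ℝ≥0∞) [Fact (1 ≤ p)] (a : ZMod 3 → ℂ) (x : PiLp p fun _ : ZMod 3 => ℂ) :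
    lam p a x = WithLp.toLp p (conv a x.ofLp) := rfl

/-- The scalar `i/√3`, for which `𝟙₀ − 2e = s (δ₂ − δ₁)`. -/
def s3 : ℂ := Complex.I * (Real.sqrt 3 / 3 : ℝ)

lemma norm_s3 : ‖s3‖ = Real.sqrt 3 / 3 := by
  rw [s3, norm_mul, Complex.norm_I, one_mul, Complex.norm_real, Real.norm_of_nonneg (by positivity)]

lemma gam_eq : gam = -(1 / 6 : ℂ) + (1 / 2) * s3 := by
  have h : (2 * Real.pi * Complex.I / 3 : ℂ) = ((Real.pi - Real.pi / 3 : ℝ) : ℂ) * Complex.I := by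
    push_cast; ring
  rw [gam, h, Complex.exp_mul_I, ← Complex.ofReal_cos, ← Complex.ofReal_sin, Real.cos_pi_sub,
    Real.sin_pi_sub, Real.cos_pi_div_three, Real.sin_pi_div_three, s3]
  push_cast; ring

lemma conj_gam : (starRingEnd ℂ) gam = -(1 / 6 : ℂ) - (1 / 2) * s3 := by
  have h : (starRingEnd ℂ) s3 = -s3 := by
    simp only [s3, map_mul, Complex.conj_I, Complex.conj_ofReal, neg_mul]
  simp only [gam_eq, map_add, map_neg, map_mul, map_div₀, map_one, map_ofNat, h]
  ring

lemma a_coords : (one0 - (2 : ℂ) • eIdem) 0 = 0 ∧ (one0 - (2 : ℂ) • eIdem) 1 = -s3 ∧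
    (one0 - (2 : ℂ) • eIdem) 2 = s3 := by
  have e1 : (0 : ZMod 3) ≠ 1 := by decide
  have e2 : (0 : ZMod 3) ≠ 2 := by decide
  have e3 : (1 : ZMod 3) ≠ 2 := by decide
  refine ⟨?_, ?_, ?_⟩ <;>
  · simp only [one0, eIdem, D1, D2, delta, Pi.sub_apply, Pi.add_apply, Pi.smul_apply,
      smul_eq_mul, conj_gam, e1, e2, e3, e1.symm, e2.symm, e3.symm, if_true, if_false]
    rw [gam_eq]
    ring

lemma sum_a : ∑ g, (one0 - (2 : ℂ) • eIdem) g = 0 := by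
  obtain ⟨h0, h1, h2⟩ := a_coords
  rw [sum3, h0, h1, h2]; ring

lemma conv_a (y : ZMod 3 → ℂ) :
    conv (one0 - (2 : ℂ) • eIdem) y 0 = s3 * (y 1 - y 2) ∧
    conv (one0 - (2 : ℂ) • eIdem) y 1 = s3 * (y 2 - y 0) ∧
    conv (one0 - (2 : ℂ) • eIdem) y 2 = s3 * (y 0 - y 1) := by
  obtain ⟨h0, h1, h2⟩ := a_coords
  obtain ⟨k0, k1, k2⟩ := conv_coords (one0 - (2 : ℂ) • eIdem) y
  rw [k0, k1, k2, h0, h1, h2]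
  refine ⟨?_, ?_, ?_⟩ <;> ring

lemma norm1 (x : PiLp 1 fun _ : ZMod 3 => ℂ) : ‖x‖ = ‖x 0‖ + ‖x 1‖ + ‖x 2‖ := by
  rw [PiLp.norm_eq_of_L1, sum3]

/-- On `ℓ¹` the operator norm of convolution is the `ℓ¹` norm of the kernel; it is attained
at `δ₀`. -/
lemma opN_one (b : ZMod 3 → ℂ) : opN 1 b = ‖b 0‖ + ‖b 1‖ + ‖b 2‖ := by
  apply le_antisymm
  · refine ContinuousLinearMap.opNorm_le_bound _ (by positivity) fun x => ?_
    obtain ⟨k0, k1, k2⟩ := conv_coords b x.ofLp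
    rw [lam_apply, norm1, norm1]
    simp only [k0, k1, k2]
    have h0 := norm_add₃_le (a := b 0 * x 0) (b := b 1 * x 2) (c := b 2 * x 1)
    have h1 := norm_add₃_le (a := b 0 * x 1) (b := b 1 * x 0) (c := b 2 * x 2)
    have h2 := norm_add₃_le (a := b 0 * x 2) (b := b 1 * x 1) (c := b 2 * x 0)
    simp only [norm_mul] at h0 h1 h2
    linarith
  · have h := (lam 1 b).le_opNorm (WithLp.toLp 1 (delta 0))
    obtain ⟨k0, k1, k2⟩ := conv_coords b (delta 0)
    have e1 : (1 : ZMod 3) ≠ 0 := by decide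
    have e2 : (2 : ZMod 3) ≠ 0 := by decide
    rw [lam_apply, norm1, norm1] at h
    simpa only [opN, k0, k1, k2, delta, e1, e2, if_true, if_false, mul_zero, mul_one, add_zero,
      zero_add, norm_zero, norm_one] using h

lemma normsq2 (x : PiLp 2 fun _ : ZMod 3 => ℂ) : ‖x‖ ^ 2 = ‖x 0‖ ^ 2 + ‖x 1‖ ^ 2 + ‖x 2‖ ^ 2 := by
  rw [PiLp.norm_sq_eq_of_L2, sum3]

/-- The Fourier transform of `𝟙₀ − 2e` is `±1` at the two nontrivial characters and `0` at the
trivial one, so convolution by it only removes the mean part of `x` from the `ℓ²` norm. -/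
lemma normsq_lam_a (x : PiLp 2 fun _ : ZMod 3 => ℂ) :
    ‖lam 2 (one0 - (2 : ℂ) • eIdem) x‖ ^ 2 = ‖x‖ ^ 2 - ‖∑ g, x g‖ ^ 2 / 3 := by
  obtain ⟨k0, k1, k2⟩ := conv_a x.ofLp
  rw [lam_apply, normsq2, normsq2, sum3]
  simp only [k0, k1, k2, norm_mul, norm_s3, mul_pow, div_pow,
    Real.sq_sqrt (show (0 : ℝ) ≤ 3 by norm_num), ← Complex.normSq_eq_norm_sq, Complex.normSq_apply,
    Complex.sub_re, Complex.sub_im, Complex.add_re, Complex.add_im]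
  ring

lemma norm_lam_a_of_sum (x : PiLp 2 fun _ : ZMod 3 => ℂ) (h : ∑ g, x g = 0) :
    ‖lam 2 (one0 - (2 : ℂ) • eIdem) x‖ = ‖x‖ := by
  have := normsq_lam_a x
  rw [h, norm_zero] at this
  exact (sq_eq_sq₀ (norm_nonneg _) (norm_nonneg _)).1 (by linarith)

lemma norm_lam_conv_a (b : ZMod 3 → ℂ) (hb : ∑ g, b g = 0) (x : PiLp 2 fun _ : ZMod 3 => ℂ) :
    ‖lam 2 (conv (one0 - (2 : ℂ) • eIdem) b) x‖ = ‖lam 2 b x‖ := by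
  rw [lam_apply, conv_assoc', ← norm_lam_a_of_sum (lam 2 b x)]
  · rfl
  · rw [lam_apply]
    change ∑ g, conv b x.ofLp g = 0
    rw [sum_conv, hb, zero_mul]

lemma opN_two_a_le : opN 2 (one0 - (2 : ℂ) • eIdem) ≤ 1 := by
  refine ContinuousLinearMap.opNorm_le_bound _ zero_le_one fun x => ?_
  rw [one_mul]
  refine (sq_le_sq₀ (norm_nonneg _) (norm_nonneg _)).1 ?_
  rw [normsq_lam_a]
  have : 0 ≤ ‖∑ g, x g‖ ^ 2 := by positivity
  linarith

lemma opN_two_conv (b : ZMod 3 → ℂ) (hb : ∑ g, b g = 0) :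
    opN 2 (conv (one0 - (2 : ℂ) • eIdem) b) = opN 2 b := by
  apply le_antisymm
  · refine ContinuousLinearMap.opNorm_le_bound _ (norm_nonneg _) fun x => ?_
    rw [norm_lam_conv_a b hb]
    exact (lam 2 b).le_opNorm x
  · refine ContinuousLinearMap.opNorm_le_bound _ (norm_nonneg _) fun x => ?_
    rw [← norm_lam_conv_a b hb]
    exact ContinuousLinearMap.le_opNorm _ x

lemma one_le_opN_two_a : 1 ≤ opN 2 (one0 - (2 : ℂ) • eIdem) := by
  -- The test vector is `a` itself: it is nonzero and has sum zero.
  have h := (lam 2 (one0 - (2 : ℂ) • eIdem)).le_opNorm (WithLp.toLp 2 (one0 - (2 : ℂ) • eIdem))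
  rw [norm_lam_a_of_sum _ sum_a] at h
  have hs : 0 < ‖s3‖ := by rw [norm_s3]; positivity
  have hpos : 0 < ‖(WithLp.toLp 2 (one0 - (2 : ℂ) • eIdem) : PiLp 2 fun _ : ZMod 3 => ℂ)‖ := by
    rw [norm_pos_iff]
    intro h0
    have h2 : (one0 - (2 : ℂ) • eIdem) 2 = 0 :=
      congrArg (fun v : PiLp 2 fun _ : ZMod 3 => ℂ => v 2) h0
    rw [a_coords.2.2] at h2
    exact (norm_pos_iff.1 hs) h2
  exact le_of_mul_le_mul_right (by rwa [one_mul]) hpos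

/-- With `γ = (1/3)exp(2πi/3)` and `e = γΔ₁ + γ̄Δ₂ ∈ ℓ₀¹(ℤ/3ℤ)`, the
multiplier norms satisfy `⦀𝟙₀ − 2e⦀₁ = 2√3/3` and `⦀𝟙₀ − 2e⦀₂ = 1`. -/
theorem mnorm_one0_sub_two_eIdem :
    mnorm 1 (one0 - (2 : ℂ) • eIdem) = 2 * Real.sqrt 3 / 3 ∧
    mnorm 2 (one0 - (2 : ℂ) • eIdem) = 1 := by
  constructor
  · apply IsGreatest.csSup_eq
    constructor
    · have e1 : (0 : ZMod 3) ≠ 1 := by decide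
      have e2 : (2 : ZMod 3) ≠ 0 := by decide
      have e3 : (2 : ZMod 3) ≠ 1 := by decide
      have b0 : ((1 / 2 : ℂ) • D1) 0 = -(1 / 2) := by simp [D1, delta, e1]
      have b1 : ((1 / 2 : ℂ) • D1) 1 = 1 / 2 := by simp [D1, delta, e1.symm]
      have b2 : ((1 / 2 : ℂ) • D1) 2 = 0 := by simp [D1, delta, e2, e3]
      refine ⟨(1 / 2 : ℂ) • D1, ?_, ?_, ?_⟩
      · rw [sum3, b0, b1, b2]; ring
      · rw [opN_one, b0, b1, b2]; norm_num
      · obtain ⟨k0, k1, k2⟩ := conv_a ((1 / 2 : ℂ) • D1)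
        rw [opN_one, k0, k1, k2, b0, b1, b2, norm_mul, norm_mul, norm_mul, norm_s3]
        norm_num
        ring
    · rintro x ⟨b, -, hb, rfl⟩
      obtain ⟨k0, k1, k2⟩ := conv_a b
      rw [opN_one] at hb
      rw [opN_one, k0, k1, k2, norm_mul, norm_mul, norm_mul, norm_s3]
      have h0 := norm_sub_le (b 1) (b 2)
      have h1 := norm_sub_le (b 2) (b 0)
      have h2 := norm_sub_le (b 0) (b 1)
      calc _ = Real.sqrt 3 / 3 * (‖b 1 - b 2‖ + ‖b 2 - b 0‖ + ‖b 0 - b 1‖) := by ring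
        _ ≤ Real.sqrt 3 / 3 * 2 := by gcongr; linarith
        _ = _ := by ring
  · apply IsGreatest.csSup_eq
    constructor
    · exact ⟨_, sum_a, opN_two_a_le,
        (le_antisymm opN_two_a_le one_le_opN_two_a).symm.trans (opN_two_conv _ sum_a).symm⟩
    · rintro x ⟨b, h0, hb, rfl⟩
      rwa [opN_two_conv b h0]

end
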